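/- Let σ > 0. There exists R₀ = R₀(m,n,σ) ≥ 1 such that for every R ≥ R₀ the following holds, with δ = R^{-m(m+n)²}, δ* = R^{-n(m+n)²}, τ = m/(m+n). Let i ∈ ℕ and let B ⊆ ℒ^{mn} be a ball of radius less than R^{-(m+n)(1+i)} with ‖A‖_∞ ≤ σ for all A ∈ B. Suppose there is no q ∈ 𝔽[X]^{m+n} and no A ∈ B satisfying both 0 < max_{1≤l'≤n} ‖q_{l'}‖ < δ* R^{m(1+i)} and max_{1≤l≤m} ‖q·C_l(Ā^*)‖ < δ* R^{-n(1+i)-m}. Then the set of q ∈ 𝔽[X]^{m+n} such that for some A ∈ B both 0 < max_{1≤l≤m} ‖q_l‖ < δ R^{n(τ+i+1)} and max_{1≤l'≤n} ‖q·C_{l'}(Ā)‖ < δ R^{-m(τ+i+1)-n} hold contains at most n linearly independent points. -/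

import Mathlib

/-!
Common setup: the field `ℒ = 𝔽((X⁻¹))` of formal Laurent series with coefficients
in a finite field `𝔽` of `k` elements.  We realize `ℒ` as `LaurentSeries 𝔽`
(Hahn series over `ℤ`) in the variable `T = X⁻¹`, so that `X` corresponds to `T⁻¹`
and the polynomial ring `𝔽[X]` corresponds to series supported on nonpositive
exponents.  The absolute value of `x = Σ_{i ≤ N} a_i X^i` (with `a_N ≠ 0`) is
`k^N`, i.e. `k^(-order x)` in terms of the `T`-adic order.
-/

open scoped Classical ENNReal NNReal
open MeasureTheory

noncomputable section

namespace FSBad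

/-- The field `ℒ = 𝔽((X⁻¹))`. -/
abbrev L (𝔽 : Type) [Field 𝔽] : Type := LaurentSeries 𝔽

variable {𝔽 : Type} [Field 𝔽] [Fintype 𝔽]

/-- The absolute value `‖·‖` on `ℒ`: `‖x‖ = k^(deg_X x)`, `‖0‖ = 0`. -/
def lnorm (x : L 𝔽) : ℝ := if x = 0 then 0 else (Fintype.card 𝔽 : ℝ) ^ (-x.order)

/-- Membership in the polynomial ring `𝔽[X] ⊆ ℒ` (polynomials in `X = T⁻¹`). -/
def IsPoly (x : L 𝔽) : Prop := ∀ i : ℤ, 0 < i → x.coeff i = 0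

/-- The height (sup-norm) `‖·‖_∞` on `ℒ^ι`. -/
def vnorm {ι : Type*} (x : ι → L 𝔽) : ℝ := ⨆ i, lnorm (x i)

/-- The closed ball in `ℒ^ι` with centre `c` and radius `ρ`. -/
def vball {ι : Type*} (c : ι → L 𝔽) (ρ : ℝ) : Set (ι → L 𝔽) :=
  {x | vnorm (fun i => x i - c i) ≤ ρ}

/-- `m × n` matrices over `ℒ`, identified with `ℒ^(mn)`. -/
abbrev Mat (𝔽 : Type) [Field 𝔽] (m n : ℕ) : Type := Matrix (Fin m) (Fin n) (L 𝔽)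

/-- The height of a matrix, i.e. the sup-norm on `ℒ^(mn)`. -/
def mnorm {m n : ℕ} (A : Mat 𝔽 m n) : ℝ := ⨆ p : Fin m × Fin n, lnorm (A p.1 p.2)

/-- The closed ball in `ℒ^(mn)` with centre `c` and radius `ρ`. -/
def mball {m n : ℕ} (c : Mat 𝔽 m n) (ρ : ℝ) : Set (Mat 𝔽 m n) :=
  {A | mnorm (A - c) ≤ ρ}

/-- The distance `⟨x⟩` from `x ∈ ℒ^h` to the polynomial lattice `𝔽[X]^h`. -/
def latDist {h : ℕ} (x : Fin h → L 𝔽) : ℝ :=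
  sInf {r : ℝ | ∃ p : Fin h → L 𝔽, (∀ i, IsPoly (p i)) ∧ r = vnorm (fun i => x i - p i)}

/-- The set `𝔅(m,n)` of badly approximable systems of `m` linear forms in `n`
variables over `ℒ`. -/
def Bad (𝔽 : Type) [Field 𝔽] [Fintype 𝔽] (m n : ℕ) : Set (Mat 𝔽 m n) :=
  {A | ∃ K : ℝ, 0 < K ∧ ∀ q : Fin m → L 𝔽, (∀ i, IsPoly (q i)) → q ≠ 0 →
    latDist (Matrix.vecMul q A) ^ n > K / vnorm q ^ m}

/-- The Hausdorff `s`-measure of `E ⊆ ℒ^(mn)`, defined through countable covers by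
balls of radii `< δ`, letting `δ → 0` (the infimum over `δ`-covers is nonincreasing
in `δ`, so the limit is the supremum over `δ > 0`). -/
def hMeasure {m n : ℕ} (s : ℝ) (E : Set (Mat 𝔽 m n)) : ℝ≥0∞ :=
  ⨆ (δ : ℝ) (_ : 0 < δ),
    ⨅ (c : ℕ → Mat 𝔽 m n) (ρ : ℕ → ℝ) (_ : ∀ i, 0 < ρ i ∧ ρ i < δ)
      (_ : E ⊆ ⋃ i, mball (c i) (ρ i)), ∑' i, ENNReal.ofReal (ρ i ^ s)

/-- The Hausdorff dimension of `E ⊆ ℒ^(mn)`. -/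
def hdim {m n : ℕ} (E : Set (Mat 𝔽 m n)) : ℝ :=
  sInf {s : ℝ | 0 ≤ s ∧ hMeasure s E = 0}

/-! ### Schmidt `(α,β)`-games on `ℒ^(mn)` -/

/-- A formal ball: an element of `Ω = ℒ^(mn) × ℝ`. -/
structure FBall (𝔽 : Type) [Field 𝔽] (m n : ℕ) where
  /-- centre -/
  c : Mat 𝔽 m n
  /-- radius -/
  r : ℝ

/-- Formal inclusion of formal balls: `(c₁,ρ₁) ⊆ (c₂,ρ₂)` iff `ρ₁ + ‖c₁ - c₂‖_∞ ≤ ρ₂`. -/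
def FBall.ssub {m n : ℕ} (B₁ B₂ : FBall 𝔽 m n) : Prop :=
  B₁.r + mnorm (B₁.c - B₂.c) ≤ B₂.r

/-- The subset of `ℒ^(mn)` determined by a formal ball. -/
def FBall.toSet {m n : ℕ} (B : FBall 𝔽 m n) : Set (Mat 𝔽 m n) := mball B.c B.r

/-- A strategy for White: given the balls `B₁, …, B_{i+1}` chosen by Black so far,
produce White's next ball. -/
abbrev Strategy (𝔽 : Type) [Field 𝔽] (m n : ℕ) : Type :=
  (i : ℕ) → (Fin (i + 1) → FBall 𝔽 m n) → FBall 𝔽 m n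

/-- White's move at stage `i` when following strategy `str` against Black's balls `B`. -/
def wMove {m n : ℕ} (str : Strategy 𝔽 m n) (B : ℕ → FBall 𝔽 m n) (i : ℕ) : FBall 𝔽 m n :=
  str i fun j => B j.1

/-- Black's move `B_{j+2}` is legal (for parameter `β`): it is a formal subset of
White's ball `W_{j+1}` and has radius `β · ρ(W_{j+1})`. -/
def BlackOk {m n : ℕ} (β : ℝ) (str : Strategy 𝔽 m n) (B : ℕ → FBall 𝔽 m n) (j : ℕ) : Prop :=
  (B (j + 1)).ssub (wMove str B j) ∧ (B (j + 1)).r = β * (wMove str B j).r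

/-- White's move `W_{i+1}` is legal (for parameter `α`): it is a formal subset of
Black's ball `B_{i+1}` and has radius `α · ρ(B_{i+1})`. -/
def WhiteOk {m n : ℕ} (α : ℝ) (str : Strategy 𝔽 m n) (B : ℕ → FBall 𝔽 m n) (i : ℕ) : Prop :=
  (wMove str B i).ssub (B i) ∧ (wMove str B i).r = α * (B i).r

/-- `str` is a winning strategy for White in the `(α,β;S)`-game: against any
sequence of Black balls, White's moves are legal as long as Black has played
legally so far, and if the whole play is legal then the intersection of the
chosen balls is contained in `S`. -/
def WinningStrategy {m n : ℕ} (α β : ℝ) (S : Set (Mat 𝔽 m n)) (str : Strategy 𝔽 m n) : Prop :=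
  ∀ B : ℕ → FBall 𝔽 m n, 0 ≤ (B 0).r →
    (∀ i, (∀ j < i, BlackOk β str B j) → WhiteOk α str B i) ∧
    ((∀ j, BlackOk β str B j) → (⋂ i, (B i).toSet) ⊆ S)

/-- `S` is `(α,β)`-winning. -/
def IsWinningAB {m n : ℕ} (α β : ℝ) (S : Set (Mat 𝔽 m n)) : Prop :=
  ∃ str : Strategy 𝔽 m n, WinningStrategy α β S str

/-- `S` is `α`-winning. -/
def IsWinningA {m n : ℕ} (α : ℝ) (S : Set (Mat 𝔽 m n)) : Prop :=
  ∀ β : ℝ, 0 < β → β < 1 → IsWinningAB α β S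

/-- The winning dimension of `S` (a supremum of a set of reals, which is `0` by
convention when the set is empty). -/
def windim {m n : ℕ} (S : Set (Mat 𝔽 m n)) : ℝ :=
  sSup {α : ℝ | 0 < α ∧ α < 1 ∧ IsWinningA α S}

/-! ### The matrices `Ā`, `Ā^*` and the quantities `M_v`, `D_v`, `∇D_v` -/

/-- `Ā = [[A, I_m], [I_n, 0]]`. Rows are indexed by `Fin m ⊕ Fin n`
(coordinates `q_1, …, q_{m+n}`), columns by `Fin n ⊕ Fin m`. -/
def Abar {m n : ℕ} (A : Mat 𝔽 m n) : Matrix (Fin m ⊕ Fin n) (Fin n ⊕ Fin m) (L 𝔽) :=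
  Matrix.fromBlocks A 1 1 0

/-- `Ā^* = [[Aᵀ, I_n], [I_m, 0]]`. Rows are indexed by `Fin n ⊕ Fin m`,
columns by `Fin m ⊕ Fin n`. -/
def AbarStar {m n : ℕ} (A : Mat 𝔽 m n) : Matrix (Fin n ⊕ Fin m) (Fin m ⊕ Fin n) (L 𝔽) :=
  Matrix.fromBlocks A.transpose 1 1 0

/-- The standard bilinear form `x·y = Σ_i x_i y_i` on `ℒ^ι`. -/
def dotL {ι : Type*} [Fintype ι] (x y : ι → L 𝔽) : L 𝔽 := ∑ i, x i * y i

/-- Strictly increasing `v`-tuples `1 ≤ i_1 < ⋯ < i_v ≤ m`. -/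
def IncTuple (v m : ℕ) : Type := {f : Fin v → Fin m // StrictMono f}

/-- The vector `M_v(A) ∈ ℒ^(C(m,v)²)` of the determinants
`det (y_{i_r} · C_{j_s}(Ā^*))_{1 ≤ r,s ≤ v}` over all strictly increasing index
tuples.  (For `v = 0` every coordinate is an empty determinant, i.e. `1`.) -/
def MvVec {m n : ℕ} (y : Fin m → (Fin n ⊕ Fin m → L 𝔽)) (v : ℕ) (A : Mat 𝔽 m n) :
    IncTuple v m × IncTuple v m → L 𝔽 := fun p =>
  Matrix.det (Matrix.of fun r s : Fin v =>
    dotL (y (p.1.1 r)) fun t => AbarStar A t (Sum.inl (p.2.1 s)))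

/-- `‖M_v(A)‖_∞`. -/
def MvNorm {m n : ℕ} (y : Fin m → (Fin n ⊕ Fin m → L 𝔽)) (v : ℕ) (A : Mat 𝔽 m n) : ℝ :=
  vnorm (MvVec y v A)

/-- `M_v(K) = max_{A ∈ K} ‖M_v(A)‖_∞` for `K ⊆ ℒ^(mn)`. -/
def MvSet {m n : ℕ} (y : Fin m → (Fin n ⊕ Fin m → L 𝔽)) (v : ℕ) (K : Set (Mat 𝔽 m n)) : ℝ :=
  sSup {r : ℝ | ∃ A ∈ K, r = MvNorm y v A}

/-- `D_v(A) = det (y_h · C_l(Ā^*))_{1 ≤ h,l ≤ v}`. -/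
def Dv {m n : ℕ} (y : Fin m → (Fin n ⊕ Fin m → L 𝔽)) (v : ℕ) (hv : v ≤ m)
    (A : Mat 𝔽 m n) : L 𝔽 :=
  Matrix.det (Matrix.of fun h l : Fin v =>
    dotL (y (Fin.castLE hv h)) fun t => AbarStar A t (Sum.inl (Fin.castLE hv l)))

/-- The discrete gradient `∇D_v(A) ∈ ℒ^(mn)`, with coordinates
`D_v(A + E_{ij}) - D_v(A)`. -/
def gradDv {m n : ℕ} (y : Fin m → (Fin n ⊕ Fin m → L 𝔽)) (v : ℕ) (hv : v ≤ m)
    (A : Mat 𝔽 m n) : Fin m × Fin n → L 𝔽 := fun p =>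
  Dv y v hv (A + Matrix.single p.1 p.2 1) - Dv y v hv A

/-- `y_1, …, y_m ∈ ℒ^(m+n)` form an orthonormal system: `y_h · y_{h'} = δ_{h h'}`
and `‖t_1 y_1 + ⋯ + t_m y_m‖_∞ = max_h ‖t_h‖`. -/
def OrthoSystem {m n : ℕ} (y : Fin m → (Fin n ⊕ Fin m → L 𝔽)) : Prop :=
  (∀ h h', dotL (y h) (y h') = if h = h' then 1 else 0) ∧
  (∀ t : Fin m → L 𝔽, vnorm (fun r => ∑ h, t h * y h r) = ⨆ h, lnorm (t h))

/-! ### Distance functions, parallelepipeds and successive minima -/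

/-- The `j`-th successive minimum of a distance function `F` on `ℒ^N`: the infimum
of all `λ > 0` such that `{F < λ}` contains `j` linearly independent points of
`𝔽[X]^N`. -/
def succMin {N : ℕ} (F : (Fin N → L 𝔽) → ℝ) (j : ℕ) : ℝ :=
  sInf {lam : ℝ | 0 < lam ∧ ∃ v : Fin j → (Fin N → L 𝔽),
    (∀ r, ∀ i, IsPoly (v r i)) ∧ LinearIndependent (L 𝔽) v ∧ ∀ r, F (v r) < lam}

/-- The distance function `F_A(x) = max_j c_j⁻¹ ‖Σ_i x_i a_{ij}‖`. -/
def FA {N : ℕ} (A : Matrix (Fin N) (Fin N) (L 𝔽)) (c : Fin N → ℝ)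
    (x : Fin N → L 𝔽) : ℝ :=
  ⨆ j, (c j)⁻¹ * lnorm (∑ i, x i * A i j)

/-- The parallelepiped `P_A(λ) = {x ∈ ℒ^N : F_A(x) < λ}`. -/
def PA {N : ℕ} (A : Matrix (Fin N) (Fin N) (L 𝔽)) (c : Fin N → ℝ) (lam : ℝ) :
    Set (Fin N → L 𝔽) := {x | FA A c x < lam}

/-- The polar distance function `F_A^*(y) = sup_{x ≠ 0} ‖x·y‖ / F_A(x)`. -/
def FAstar {N : ℕ} (A : Matrix (Fin N) (Fin N) (L 𝔽)) (c : Fin N → ℝ)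
    (y : Fin N → L 𝔽) : ℝ :=
  ⨆ x : {x : Fin N → L 𝔽 // x ≠ 0}, lnorm (dotL x.1 y) / FA A c x.1

/-! ### Haar measure, characterized by translation invariance and normalization -/

/-- The Borel σ-algebra on `ℒ^N`, generated by the balls. -/
def vecSigma (𝔽 : Type) [Field 𝔽] [Fintype 𝔽] (N : ℕ) : MeasurableSpace (Fin N → L 𝔽) :=
  MeasurableSpace.generateFrom {s | ∃ c ρ, (0 : ℝ) < ρ ∧ s = vball c ρ}

/-- `μ` is the Haar measure on `ℒ^N`: translation invariant and normalized so that
the unit ball `I^N` has measure `1` (these properties determine it uniquely). -/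
def IsHaarVec {N : ℕ} (μ : @Measure (Fin N → L 𝔽) (vecSigma 𝔽 N)) : Prop :=
  (∀ (v : Fin N → L 𝔽) (s : Set (Fin N → L 𝔽)), μ ((fun x => x + v) ⁻¹' s) = μ s) ∧
  μ {x | ∀ i, lnorm (x i) < 1} = 1

/-- The Borel σ-algebra on `ℒ^(mn)`, generated by the balls. -/
def matSigma (𝔽 : Type) [Field 𝔽] [Fintype 𝔽] (m n : ℕ) : MeasurableSpace (Mat 𝔽 m n) :=
  MeasurableSpace.generateFrom {s | ∃ c ρ, (0 : ℝ) < ρ ∧ s = mball c ρ}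

/-- `μ` is the Haar measure on `ℒ^(mn)`: translation invariant and normalized so
that the unit ball `I^(mn)` has measure `1`. -/
def IsHaarMat {m n : ℕ} (μ : @Measure (Mat 𝔽 m n) (matSigma 𝔽 m n)) : Prop :=
  (∀ (v : Mat 𝔽 m n) (s : Set (Mat 𝔽 m n)), μ ((fun x => x + v) ⁻¹' s) = μ s) ∧
  μ {A | ∀ i j, lnorm (A i j) < 1} = 1

/-! ### The constants of Section 3 -/

/-- `τ = m/(m+n)`. -/
def tau (m n : ℕ) : ℝ := m / (m + n)

/-- `δ = R^(-m(m+n)²)`. -/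
def del (R : ℝ) (m n : ℕ) : ℝ := R ^ (-((m : ℝ) * ((m : ℝ) + n) ^ 2))

/-- `δ* = R^(-n(m+n)²)`. -/
def delStar (R : ℝ) (m n : ℕ) : ℝ := R ^ (-((n : ℝ) * ((m : ℝ) + n) ^ 2))

/-- All coefficients of index at most `c` vanish. -/
def Van (c : ℤ) (x : L 𝔽) : Prop := ∀ i : ℤ, i ≤ c → x.coeff i = 0

theorem Van.mul {u w : ℤ} {x y : L 𝔽} (hx : Van u x) (hy : Van w y) : Van (u + w + 1) (x * y) := by
  intro i hi
  rw [HahnSeries.coeff_mul]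
  apply Finset.sum_eq_zero
  rintro ⟨a, b⟩ hab
  rw [Finset.mem_antidiagonal] at hab
  obtain ⟨-, -, h⟩ := hab
  simp only at h ⊢
  by_cases ha : a ≤ u
  · rw [hx a ha, zero_mul]
  · rw [hy b (by omega), mul_zero]

theorem Van.sum {ι : Type*} [Fintype ι] {c : ℤ} {x : ι → L 𝔽} (h : ∀ i, Van c (x i)) :
    Van c (∑ i, x i) := by
  intro i hi
  rw [HahnSeries.coeff_sum]
  exact Finset.sum_eq_zero fun j _ => h j i hi

theorem Van.mono {c d : ℤ} {x : L 𝔽} (h : Van c x) (hd : d ≤ c) : Van d x :=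
  fun i hi => h i (hi.trans hd)

theorem Van.add {c : ℤ} {x y : L 𝔽} (h : Van c x) (h' : Van c y) : Van c (x + y) := by
  intro i hi
  rw [HahnSeries.coeff_add, h i hi, h' i hi, add_zero]

theorem IsPoly.mul {x y : L 𝔽} (hx : IsPoly x) (hy : IsPoly y) : IsPoly (x * y) := by
  intro i hi
  rw [HahnSeries.coeff_mul]
  apply Finset.sum_eq_zero
  rintro ⟨a, b⟩ hab
  rw [Finset.mem_antidiagonal] at hab
  obtain ⟨-, -, h⟩ := hab
  simp only at h ⊢
  by_cases ha : 0 < a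
  · rw [hx a ha, zero_mul]
  · rw [hy b (by omega), mul_zero]

theorem IsPoly.sum {ι : Type*} [Fintype ι] {x : ι → L 𝔽} (h : ∀ i, IsPoly (x i)) :
    IsPoly (∑ i, x i) := by
  intro i hi
  rw [HahnSeries.coeff_sum]
  exact Finset.sum_eq_zero fun j _ => h j i hi

theorem IsPoly.eq_zero {x : L 𝔽} (h : IsPoly x) (h' : Van 0 x) : x = 0 := by
  ext i
  by_cases hi : 0 < i
  · exact h i hi
  · exact h' i (by omega)

/-- The polynomial with given coefficients. -/
def mkP {d : ℕ} (z : Fin d → 𝔽) : L 𝔽 := ∑ t : Fin d, HahnSeries.single (-(t : ℤ)) (z t)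

theorem mkP_mul_coeff {d : ℕ} (z : Fin d → 𝔽) (f : L 𝔽) (i : ℤ) :
    (mkP z * f).coeff i = ∑ t : Fin d, z t * f.coeff (i + t) := by
  rw [mkP, Finset.sum_mul, HahnSeries.coeff_sum]
  refine Finset.sum_congr rfl fun t _ => ?_
  rw [HahnSeries.coeff_single_mul, sub_neg_eq_add]

theorem mkP_isPoly {d : ℕ} (z : Fin d → 𝔽) : IsPoly (mkP z) := by
  intro i hi
  rw [mkP, HahnSeries.coeff_sum]
  refine Finset.sum_eq_zero fun t _ => ?_
  exact HahnSeries.coeff_single_of_ne (by omega)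

theorem mkP_van {d : ℕ} (z : Fin d → 𝔽) : Van (-d) (mkP z) := by
  intro i hi
  rw [mkP, HahnSeries.coeff_sum]
  refine Finset.sum_eq_zero fun t _ => ?_
  exact HahnSeries.coeff_single_of_ne (by have := t.2; omega)

theorem mkP_coeff {d : ℕ} (z : Fin d → 𝔽) (t : Fin d) : (mkP z).coeff (-(t : ℤ)) = z t := by
  rw [mkP, HahnSeries.coeff_sum, Finset.sum_eq_single t]
  · exact HahnSeries.coeff_single_same _ _
  · intro s _ hs
    apply HahnSeries.coeff_single_of_ne
    intro h
    apply hs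
    ext
    omega
  · simp

theorem eq_mkP {d : ℕ} {x : L 𝔽} (h : IsPoly x) (h' : Van (-d) x) :
    x = mkP (fun t : Fin d => x.coeff (-(t : ℤ))) := by
  ext i
  by_cases hi : 0 < i
  · rw [h i hi, mkP_isPoly _ i hi]
  by_cases hi' : i ≤ -d
  · rw [h' i hi', mkP_van _ i hi']
  obtain ⟨t, rfl⟩ : ∃ t : Fin d, i = -(t : ℤ) := ⟨⟨(-i).toNat, by omega⟩, by simp; omega⟩
  rw [mkP_coeff]

/-- The polynomial part. -/
def polyPart (x : L 𝔽) : L 𝔽 :=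
  ⟨fun i => if i ≤ 0 then x.coeff i else 0, x.isPWO_support.mono (by
    intro i hi
    simp only [Function.mem_support, ne_eq, ite_eq_right_iff, not_forall] at hi
    exact hi.2)⟩

theorem polyPart_isPoly (x : L 𝔽) : IsPoly (polyPart x) := by
  intro i hi
  simp [polyPart, hi]

theorem polyPart_coeff (x : L 𝔽) (i : ℤ) (hi : i ≤ 0) : (polyPart x).coeff i = x.coeff i := by
  simp [polyPart, hi]

/-- The main linear algebra argument. -/
theorem core {m n N : ℕ} (A : Mat 𝔽 m n) (q1 : Fin N → Fin m → L 𝔽) (q2 : Fin N → Fin n → L 𝔽)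
    (a b d : ℕ) (e h : ℤ)
    (hp1 : ∀ r l, IsPoly (q1 r l)) (hp2 : ∀ r l, IsPoly (q2 r l))
    (hq : ∀ r l, Van (-h) (q1 r l))
    (hf : ∀ r l', Van e ((∑ l, q1 r l * A l l') + q2 r l'))
    (hli : ∀ x : Fin N → L 𝔽, (∀ l, ∑ r, x r * q1 r l = 0) → (∀ l, ∑ r, x r * q2 r l = 0) → x = 0)
    (hda : d + a ≤ e) (hdb : d + h ≤ b) (hcount : m * b < n * a + N * d) :
    ∃ (p1 : Fin n → L 𝔽) (p2 : Fin m → L 𝔽), (∀ l, IsPoly (p1 l)) ∧ (∀ l, IsPoly (p2 l)) ∧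
      p1 ≠ 0 ∧ (∀ l, Van (-a) (p1 l)) ∧
      ∀ l, Van b ((∑ l', p1 l' * A l l') + p2 l) := by
  set Φ : Matrix (Fin m × Fin b) (Fin n × Fin a) 𝔽 :=
    Matrix.of fun i j => (A i.1 j.1).coeff ((i.2 : ℤ) + 1 + j.2) with hΦ
  set Ψ : Matrix (Fin N × Fin d) (Fin m × Fin b) 𝔽 :=
    Matrix.of fun i j => (q1 i.1 j.1).coeff ((i.2 : ℤ) - j.2) with hΨ
  have hmul : Ψ * Φ = 0 := by
    ext ⟨r, t⟩ ⟨l', s⟩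
    have ht := t.2
    have hs := s.2
    have key : ∀ l, ∑ j : Fin b, (q1 r l).coeff ((t : ℤ) - j) * (A l l').coeff ((j : ℤ) + 1 + s)
        = (q1 r l * A l l').coeff ((t : ℤ) + s + 1) := by
      intro l
      set y : L 𝔽 := HahnSeries.single (-(t : ℤ)) 1 * q1 r l with hy
      have hyc : ∀ i, y.coeff i = (q1 r l).coeff (i + t) := by
        intro i
        rw [hy, HahnSeries.coeff_single_mul, one_mul, sub_neg_eq_add]
      have h1 : IsPoly y := fun i hi => by
        rw [hyc]; exact hp1 r l _ (by omega)
      have h2 : Van (-b) y := fun i hi => by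
        rw [hyc]; exact hq r l _ (by omega)
      have h3 : (y * A l l').coeff ((s : ℤ) + 1) = (q1 r l * A l l').coeff ((t : ℤ) + s + 1) := by
        rw [hy, mul_assoc, HahnSeries.coeff_single_mul, one_mul, sub_neg_eq_add]
        congr 1; ring
      rw [← h3, eq_mkP h1 h2, mkP_mul_coeff]
      refine Finset.sum_congr rfl fun j _ => ?_
      rw [hyc]
      congr 2 <;> ring
    rw [Matrix.mul_apply, Fintype.sum_prod_type]
    simp only [hΦ, hΨ, Matrix.of_apply, Matrix.zero_apply]
    rw [Finset.sum_congr rfl fun l _ => key l, ← HahnSeries.coeff_sum]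
    have h4 := hf r l' ((t : ℤ) + s + 1) (by omega)
    rw [HahnSeries.coeff_add, hp2 r l' _ (by omega), add_zero] at h4
    exact h4
  have hrow : LinearIndependent 𝔽 Ψ.row := by
    rw [Fintype.linearIndependent_iff]
    intro z hz
    set x : Fin N → L 𝔽 := fun r => mkP (fun t => z (r, t)) with hx
    have hxp : ∀ r, IsPoly (x r) := fun r => mkP_isPoly _
    have hxv : ∀ r, Van (-d) (x r) := fun r => mkP_van _
    have e1 : ∀ l, ∑ r, x r * q1 r l = 0 := by
      intro l
      have hP : IsPoly (∑ r, x r * q1 r l) := IsPoly.sum fun r => (hxp r).mul (hp1 r l)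
      have hV : Van (-d + -h + 1) (∑ r, x r * q1 r l) :=
        Van.sum fun r => (hxv r).mul (hq r l)
      apply hP.eq_zero
      intro i hi
      by_cases hib : i ≤ -b
      · exact hV i (by omega)
      obtain ⟨j, rfl⟩ : ∃ j : Fin b, i = -(j : ℤ) := ⟨⟨(-i).toNat, by omega⟩, by simp; omega⟩
      have := congrFun hz (l, j)
      rw [Finset.sum_apply, Fintype.sum_prod_type] at this
      rw [HahnSeries.coeff_sum]
      refine Eq.trans (Finset.sum_congr rfl fun r _ => ?_) this
      rw [hx, mkP_mul_coeff]
      refine Finset.sum_congr rfl fun t _ => ?_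
      simp only [Pi.smul_apply, smul_eq_mul, Matrix.row, hΨ, Matrix.of_apply]
      congr 2; ring
    have e2 : ∀ l', ∑ r, x r * q2 r l' = 0 := by
      intro l'
      have hP : IsPoly (∑ r, x r * q2 r l') := IsPoly.sum fun r => (hxp r).mul (hp2 r l')
      have heq : ∑ r, x r * q2 r l' = ∑ r, x r * ((∑ l, q1 r l * A l l') + q2 r l') := by
        simp only [mul_add, Finset.sum_add_distrib, Finset.mul_sum]
        rw [Finset.sum_comm]
        have : ∀ l, ∑ r, x r * (q1 r l * A l l') = 0 := by
          intro l
          rw [← zero_mul (A l l'), ← e1 l, Finset.sum_mul]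
          exact Finset.sum_congr rfl fun r _ => by ring
        simp [this]
      apply hP.eq_zero
      rw [heq]
      exact (Van.sum fun r => (hxv r).mul (hf r l')).mono (by omega)
    have hx0 := hli x e1 e2
    rintro ⟨r, t⟩
    have := congrFun hx0 r
    rw [← mkP_coeff (fun t => z (r, t)) t]
    change (x r).coeff _ = 0
    rw [this]; simp
  have hrankΨ : Ψ.rank = N * d := by
    rw [hrow.rank_matrix]; simp
  have hrk := Matrix.rank_add_rank_le_card_of_mul_eq_zero hmul
  simp only [Fintype.card_prod, Fintype.card_fin] at hrk
  have hcol : ¬ LinearIndependent 𝔽 Φ.col := by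
    intro hc
    have : Φ.rank = n * a := by
      rw [← Matrix.rank_transpose]
      have := LinearIndependent.rank_matrix (M := Φ.transpose) hc
      rw [this]; simp
    omega
  rw [Fintype.not_linearIndependent_iff] at hcol
  obtain ⟨z, hz, ⟨l0, s0⟩, hz0⟩ := hcol
  set p1 : Fin n → L 𝔽 := fun l' => mkP fun s => z (l', s) with hp1d
  refine ⟨p1, fun l => - polyPart (∑ l', p1 l' * A l l'), fun l => mkP_isPoly _, ?_, ?_,
    fun l => mkP_van _, ?_⟩
  · intro l i hi
    rw [HahnSeries.coeff_neg, polyPart_isPoly _ i hi, neg_zero]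
  · intro h0
    apply hz0
    rw [← mkP_coeff (fun s => z (l0, s)) s0]
    change (p1 l0).coeff _ = 0
    rw [h0]; simp
  · intro l i hi
    rw [HahnSeries.coeff_add, HahnSeries.coeff_neg]
    by_cases hi0 : i ≤ 0
    · rw [polyPart_coeff _ _ hi0]; ring
    rw [polyPart_isPoly _ i (by omega), neg_zero, add_zero]
    obtain ⟨j, rfl⟩ : ∃ j : Fin b, i = (j : ℤ) + 1 := ⟨⟨(i-1).toNat, by omega⟩, by simp; omega⟩
    have := congrFun hz (l, j)
    rw [Finset.sum_apply, Fintype.sum_prod_type] at this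
    rw [HahnSeries.coeff_sum]
    refine Eq.trans (Finset.sum_congr rfl fun r _ => ?_) this
    rw [hp1d, mkP_mul_coeff]
    refine Finset.sum_congr rfl fun t _ => ?_
    simp [Matrix.col, hΦ]

theorem lnorm_lt_iff (x : L 𝔽) (c : ℤ) : lnorm x < (Fintype.card 𝔽 : ℝ) ^ c ↔ Van (-c) x := by
  have hk : (1 : ℝ) < Fintype.card 𝔽 := by exact_mod_cast Fintype.one_lt_card
  unfold lnorm
  split_ifs with hx
  · subst hx
    exact ⟨fun _ i _ => by simp, fun _ => by positivity⟩
  · rw [zpow_lt_zpow_iff_right₀ hk]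
    constructor
    · intro h i hi
      exact HahnSeries.coeff_eq_zero_of_lt_order (by omega)
    · intro h
      by_contra hc
      exact hx (HahnSeries.coeff_order_eq_zero.1 (h _ (by omega)))

theorem lnorm_nonneg (x : L 𝔽) : 0 ≤ lnorm x := by
  unfold lnorm; split_ifs <;> positivity

theorem lnorm_pos {x : L 𝔽} (hx : x ≠ 0) : 0 < lnorm x := by
  have hk : (1 : ℝ) < Fintype.card 𝔽 := by exact_mod_cast Fintype.one_lt_card
  unfold lnorm; rw [if_neg hx]; positivity

theorem sup_lt {ι : Type*} [Finite ι] [Nonempty ι] {f : ι → ℝ} {c : ℝ} (h : ∀ i, f i < c) :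
    (⨆ i, f i) < c := by
  obtain ⟨i, hi⟩ := exists_eq_ciSup_of_finite (f := f)
  rw [← hi]; exact h i

theorem le_sup {ι : Type*} [Finite ι] (f : ι → ℝ) (i : ι) : f i ≤ ⨆ i, f i :=
  le_ciSup (Set.finite_range f).bddAbove i

set_option linter.unusedSectionVars false

set_option maxHeartbeats 1000000 in
theorem params (m n : ℕ) (hm : 0 < m) (hn : 0 < n) (Λ : ℝ) (hΛ : 4 * n + m + 4 ≤ Λ) (I τ : ℝ)
    (hI : 1 ≤ I) (hτ : τ * ((m : ℝ) + n) = m) :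
    ∃ a b d : ℕ,
      (d : ℤ) + a ≤ ⌊Λ * (((m : ℝ) + n) * I)⌋ - ⌈Λ * (n * I + n * τ - m * ((m : ℝ) + n) ^ 2)⌉ ∧
      (d : ℤ) + ⌈Λ * (n * I + n * τ - m * ((m : ℝ) + n) ^ 2)⌉ ≤ b ∧
      m * b < n * a + (n + 1) * d ∧
      (((a : ℝ) ≤ Λ * (m * I - n * ((m : ℝ) + n) ^ 2) ∧
        Λ * (n * ((m : ℝ) + n) ^ 2 + n * I + m) ≤ b) ∨ a = 0) := by
  set ω := Λ * (((m : ℝ) + n) * I) with hω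
  set η := Λ * (n * I + n * τ - m * ((m : ℝ) + n) ^ 2) with hη
  have hm' : (1 : ℝ) ≤ m := by exact_mod_cast hm
  have hn' : (1 : ℝ) ≤ n := by exact_mod_cast hn
  have hΛ0 : 0 < Λ := by linarith
  have hτ0 : 0 ≤ τ := by
    by_contra h
    push Not at h
    nlinarith
  have hτ1 : (n + 1) * τ ≤ m := by nlinarith
  have hnτ : (n + 1) * (n * τ) ≤ m * n := by nlinarith
  have hnτ' : n * τ ≤ m := by nlinarith
  have hW1 := Int.floor_le ω
  have hW2 := Int.lt_floor_add_one ω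
  have hh1 := Int.le_ceil η
  have hh2 := Int.ceil_lt_add_one η
  set W := ⌊ω⌋
  set h := ⌈η⌉
  set S := (m : ℝ) + n with hS
  have hS2 : 2 ≤ S := by linarith
  have hSm : (m : ℝ) + 1 ≤ S := by linarith
  have hcube : S ^ 2 ≥ m * S + S := by nlinarith
  have hcube2 : S ^ 3 ≥ m * S + m + 1 := by nlinarith
  by_cases hα : 0 ≤ Λ * (m * I - n * S ^ 2)
  · set α := Λ * (m * I - n * S ^ 2) with hαd
    set β := Λ * (n * S ^ 2 + n * I + m) with hβd
    have hβ : 0 ≤ β := by positivity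
    set γ := Λ * (S ^ 3 - n * τ) - 2 with hγd
    have hγ : 0 ≤ γ := by
      have : 1 ≤ S ^ 3 - n * τ := by nlinarith
      have := le_mul_of_one_le_right hΛ0.le this
      linarith
    have ha1 := Nat.floor_le hα
    have ha2 := Nat.lt_floor_add_one α
    have hb1 := Nat.le_ceil β
    have hb2 := Nat.ceil_lt_add_one hβ
    have hd1 := Nat.floor_le hγ
    have hd2 := Nat.lt_floor_add_one γ
    refine ⟨⌊α⌋₊, ⌈β⌉₊, ⌊γ⌋₊, ?_, ?_, ?_, Or.inl ⟨ha1, hb1⟩⟩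
    · have : ω - η - α = γ + 2 := by rw [hω, hη, hαd, hγd, hS]; ring
      have h2 : ((⌊γ⌋₊ : ℤ) : ℝ) + (⌊α⌋₊ : ℤ) < ((W - h : ℤ) : ℝ) + 1 := by
        push_cast; linarith
      exact Int.lt_add_one_iff.1 (by exact_mod_cast h2)
    · have : β - η = γ + 2 + Λ * m := by rw [hβd, hη, hγd, hS]; ring
      have h3 : 0 ≤ Λ * m := by positivity
      have h2 : ((⌊γ⌋₊ : ℤ) : ℝ) + (h : ℝ) < ((⌈β⌉₊ : ℤ) : ℝ) := by
        push_cast; linarith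
      exact_mod_cast h2.le
    · have h4 : (n : ℝ) * α + (n + 1) * (γ + 2) - m * β
          = Λ * (S ^ 3 - m ^ 2 - (n + 1) * (n * τ)) := by
        rw [hαd, hβd, hγd, hS]; ring
      have h5 : 1 ≤ S ^ 3 - m ^ 2 - (n + 1) * (n * τ) := by
        have : (m : ℝ) * S = m ^ 2 + m * n := by rw [hS]; ring
        nlinarith
      have h6 : Λ ≤ Λ * (S ^ 3 - m ^ 2 - (n + 1) * (n * τ)) := le_mul_of_one_le_right hΛ0.le h5
      have : (m : ℝ) * ⌈β⌉₊ < n * ⌊α⌋₊ + (n + 1) * ⌊γ⌋₊ := by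
        have c1 : (m : ℝ) * ⌈β⌉₊ ≤ m * (β + 1) := by gcongr
        have c2 : (n : ℝ) * (α - 1) ≤ n * ⌊α⌋₊ := by gcongr; linarith
        have c3 : ((n : ℝ) + 1) * (γ - 1) < (n + 1) * ⌊γ⌋₊ := by gcongr; linarith
        linarith
      exact_mod_cast this
  · have hα' : m * I - n * S ^ 2 < 0 := by
      by_contra hc
      push Not at hc
      exact hα (by positivity)
    have hωη : ω - η = Λ * (m * S ^ 2 + m * I - n * τ) := by rw [hω, hη, hS]; ring
    have hpos : 1 ≤ m * S ^ 2 + m * I - n * τ := by nlinarith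
    have he0 : (0 : ℝ) < ((W - h : ℤ) : ℝ) := by
      push_cast
      have := le_mul_of_one_le_right hΛ0.le hpos
      linarith
    have he0' : 0 < W - h := by exact_mod_cast he0
    have hW0 : 0 ≤ W := Int.floor_nonneg.2 (by positivity)
    obtain ⟨b, hb⟩ := Int.eq_ofNat_of_zero_le hW0
    obtain ⟨d, hd⟩ := Int.eq_ofNat_of_zero_le he0'.le
    refine ⟨0, b, d, by simp [hd], by omega, ?_, Or.inr rfl⟩
    have hbR : (b : ℝ) = W := by rw [hb]; simp
    have hdR : (d : ℝ) = W - h := by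
      have : ((W - h : ℤ) : ℝ) = d := by rw [hd]; simp
      rw [← this]; push_cast; ring
    have key : 1 ≤ (n + 1) * (m * S ^ 2 + m * I - n * τ) - m * (S * I) := by
      have e1 : (n + 1) * (m * S ^ 2 + m * I - n * τ) - m * (S * I)
        = (n + 1) * m * S ^ 2 - (n + 1) * (n * τ) - (m - 1) * (m * I) := by rw [hS]; ring
      have e2 : ((m : ℝ) - 1) * (m * I) ≤ (m - 1) * (n * S ^ 2) := by
        apply mul_le_mul_of_nonneg_left <;> linarith
      have e3 : ((n : ℝ) + 1) * m * S ^ 2 - (m - 1) * (n * S ^ 2) = S ^ 3 := by rw [hS]; ring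
      have e4 : (m : ℝ) * S = m ^ 2 + m * n := by rw [hS]; ring
      nlinarith
    have key2 : Λ ≤ (n + 1) * (ω - η) - m * ω := by
      have : (n + 1) * (ω - η) - m * ω
        = Λ * ((n + 1) * (m * S ^ 2 + m * I - n * τ) - m * (S * I)) := by
        rw [hωη, hω]; ring
      rw [this]; exact le_mul_of_one_le_right hΛ0.le key
    have : (m : ℝ) * b < n * (0 : ℕ) + (n + 1) * d := by
      rw [hbR, hdR]
      have c1 : (m : ℝ) * W ≤ m * ω := by gcongr
      have c2 : ((n : ℝ) + 1) * (ω - η - 2) ≤ (n + 1) * (W - h) :=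
        mul_le_mul_of_nonneg_left (by linarith) (by positivity)
      push_cast
      linarith
    exact_mod_cast this

/-- **Theorem (Statement 6).** (Lemma `subspace2`.)  If on a small ball `B` the system
(16)–(17) at level `i` has no polynomial solutions, then the set of `q ∈ 𝔽[X]^{m+n}`
solving (14)–(15) at level `i + 1` for some `A ∈ B` contains at most `n` linearly
independent points. -/
theorem subspace_two (𝔽 : Type) [Field 𝔽] [Fintype 𝔽] (m n : ℕ)
    (hm : 0 < m) (hn : 0 < n) (σ : ℝ) (hσ : 0 < σ) :
    ∃ R₀ : ℝ, 1 ≤ R₀ ∧ ∀ R : ℝ, R₀ ≤ R →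
      ∀ (i : ℕ) (c₀ : Mat 𝔽 m n) (ρ : ℝ),
        ρ < R ^ (-((m : ℝ) + n) * (1 + i)) →
        (∀ A ∈ mball c₀ ρ, mnorm A ≤ σ) →
        (¬ ∃ (q : Fin n ⊕ Fin m → L 𝔽) (A : Mat 𝔽 m n), A ∈ mball c₀ ρ ∧
          (∀ t, IsPoly (q t)) ∧
          0 < (⨆ l' : Fin n, lnorm (q (Sum.inl l'))) ∧
          (⨆ l' : Fin n, lnorm (q (Sum.inl l'))) <
            delStar R m n * R ^ ((m : ℝ) * (1 + i)) ∧
          (⨆ l : Fin m, lnorm (Matrix.vecMul q (AbarStar A) (Sum.inl l))) <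
            delStar R m n * R ^ (-(n : ℝ) * (1 + i) - m)) →
        ∀ v : Fin (n + 1) → (Fin m ⊕ Fin n → L 𝔽),
          (∀ r, (∀ t, IsPoly (v r t)) ∧ ∃ A ∈ mball c₀ ρ,
            0 < (⨆ l : Fin m, lnorm (v r (Sum.inl l))) ∧
            (⨆ l : Fin m, lnorm (v r (Sum.inl l))) <
              del R m n * R ^ ((n : ℝ) * (tau m n + i + 1)) ∧
            (⨆ l' : Fin n, lnorm (Matrix.vecMul (v r) (Abar A) (Sum.inl l'))) <
              del R m n * R ^ (-(m : ℝ) * (tau m n + i + 1) - n)) →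
          ¬ LinearIndependent (L 𝔽) v := by
  have hk : (1 : ℝ) < Fintype.card 𝔽 := by exact_mod_cast Fintype.one_lt_card
  set k : ℝ := (Fintype.card 𝔽 : ℝ) with hkd
  have hk0 : 0 < k := by linarith
  refine ⟨k ^ (4 * n + m + 4 : ℝ), Real.one_le_rpow hk.le (by positivity), ?_⟩
  intro R hR i c₀ ρ hρ _ hno v hv hli
  have hR0 : 0 < R := lt_of_lt_of_le (by positivity) hR
  obtain ⟨Λ, hΛ⟩ : ∃ Λ : ℝ, R = k ^ Λ := ⟨Real.logb k R, (Real.rpow_logb hk0 hk.ne' hR0).symm⟩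
  have hΛ4 : 4 * (n : ℝ) + m + 4 ≤ Λ := by
    rw [hΛ] at hR
    exact (Real.rpow_le_rpow_left_iff hk).1 hR
  have hRp : ∀ x : ℝ, R ^ x = k ^ (Λ * x) := fun x => by rw [hΛ, Real.rpow_mul hk0.le]
  have hRR : ∀ x y : ℝ, R ^ x * R ^ y = k ^ (Λ * (x + y)) := fun x y => by
    rw [← Real.rpow_add hR0, hRp]
  have hΛ0 : 0 < Λ := by
    have : (0 : ℝ) ≤ n := by positivity
    have : (0 : ℝ) ≤ m := by positivity
    linarith
  have hτ : tau m n * ((m : ℝ) + n) = m := by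
    have : (m : ℝ) + n ≠ 0 := by positivity
    rw [tau]; field_simp
  have hτ0 : 0 ≤ tau m n := by rw [tau]; positivity
  simp only [del, delStar, hRR] at hno hv
  rw [hRp] at hρ
  haveI : Nonempty (Fin m) := ⟨⟨0, hm⟩⟩
  haveI : Nonempty (Fin n) := ⟨⟨0, hn⟩⟩
  obtain ⟨a, b, d, hda, hdb, hcount, hab⟩ :=
    params m n hm hn Λ hΛ4 (1 + i) (tau m n) (by have : (0 : ℝ) ≤ i := by positivity
                                                 linarith) hτ
  set W := ⌊Λ * (((m : ℝ) + n) * (1 + i))⌋ with hW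
  set h := ⌈Λ * (n * (1 + i) + n * tau m n - m * ((m : ℝ) + n) ^ 2)⌉ with hh
  have hq : ∀ r l, Van (-h) (v r (Sum.inl l)) := by
    intro r l
    obtain ⟨-, A, hA, -, h1, -⟩ := hv r
    rw [← lnorm_lt_iff]
    refine lt_of_le_of_lt (le_sup (fun l => lnorm (v r (Sum.inl l))) l) (h1.trans_le ?_)
    rw [← hkd, ← Real.rpow_intCast]
    apply Real.rpow_le_rpow_of_exponent_le hk.le
    refine le_trans (le_of_eq ?_) (Int.le_ceil _)
    ring
  have hf : ∀ r l', Van (W - h) ((∑ l, v r (Sum.inl l) * c₀ l l') + v r (Sum.inr l')) := by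
    intro r l'
    obtain ⟨-, A, hA, -, -, h2⟩ := hv r
    have hAc : ∀ l, Van W ((A - c₀) l l') := by
      intro l
      have := (lnorm_lt_iff ((A - c₀) l l') (-W)).1
      rw [neg_neg] at this
      apply this
      refine lt_of_le_of_lt ((le_sup (fun p : Fin m × Fin n => lnorm ((A - c₀) p.1 p.2)) (l, l')).trans
        hA) (hρ.trans_le ?_)
      rw [← hkd, ← Real.rpow_intCast]
      apply Real.rpow_le_rpow_of_exponent_le hk.le
      have := Int.floor_le (Λ * (((m : ℝ) + n) * (1 + i)))
      push_cast
      rw [← hW] at this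
      linarith
    have hfA : Van (W - h) ((∑ l, v r (Sum.inl l) * A l l') + v r (Sum.inr l')) := by
      have := (lnorm_lt_iff ((∑ l, v r (Sum.inl l) * A l l') + v r (Sum.inr l')) (-(W - h))).1
      rw [neg_neg] at this
      apply this
      have hvm : Matrix.vecMul (v r) (Abar A) (Sum.inl l')
          = (∑ l, v r (Sum.inl l) * A l l') + v r (Sum.inr l') := by
        simp [Matrix.vecMul, dotProduct, Abar, Matrix.one_apply]
      rw [← hvm]
      refine lt_of_le_of_lt (le_sup (fun l' => lnorm (Matrix.vecMul (v r) (Abar A) (Sum.inl l'))) l')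
        (h2.trans_le ?_)
      rw [← hkd, ← Real.rpow_intCast]
      apply Real.rpow_le_rpow_of_exponent_le hk.le
      have h3 := Int.floor_le (Λ * (((m : ℝ) + n) * (1 + i)))
      have h4 := Int.le_ceil (Λ * (n * (1 + i) + n * tau m n - m * ((m : ℝ) + n) ^ 2))
      rw [← hW] at h3
      rw [← hh] at h4
      push_cast
      have h5 : 0 ≤ Λ * ((m : ℝ) * tau m n + n + n * tau m n) := by positivity
      linarith
    have heq : (∑ l, v r (Sum.inl l) * c₀ l l') + v r (Sum.inr l')
        = ((∑ l, v r (Sum.inl l) * A l l') + v r (Sum.inr l'))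
          + ∑ l, (-v r (Sum.inl l)) * (A - c₀) l l' := by
      simp only [Matrix.sub_apply, mul_sub, neg_mul, Finset.sum_sub_distrib, Finset.sum_neg_distrib]
      ring
    rw [heq]
    refine hfA.add (Van.sum fun l => ?_)
    refine Van.mono (Van.mul (u := -h) (w := W) ?_ (hAc l)) (by omega)
    intro j hj
    rw [HahnSeries.coeff_neg, hq r l j hj, neg_zero]
  have hc₀ : c₀ ∈ mball c₀ ρ := by
    obtain ⟨-, A, hA, -⟩ := hv 0
    have h0 : 0 ≤ ρ := by
      refine le_trans ?_ hA
      exact Real.iSup_nonneg fun p => lnorm_nonneg _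
    change mnorm (c₀ - c₀) ≤ ρ
    simpa [mnorm, lnorm] using h0
  obtain ⟨p1, p2, hp1, hp2, hne, hpa, hpb⟩ := core c₀ (fun r l => v r (Sum.inl l))
    (fun r l => v r (Sum.inr l)) a b d (W - h) h (fun r l => (hv r).1 _) (fun r l => (hv r).1 _)
    hq hf (by
      intro x h1 h2
      rw [Fintype.linearIndependent_iff] at hli
      funext r
      refine hli x ?_ r
      funext t
      rw [Finset.sum_apply]
      rcases t with l | l
      · exact h1 l
      · exact h2 l) hda hdb hcount
  obtain ⟨l0, hl0⟩ : ∃ l, p1 l ≠ 0 := by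
    by_contra hc
    push Not at hc
    exact hne (funext hc)
  rcases hab with ⟨haα, hbβ⟩ | ha0
  · apply hno
    refine ⟨Sum.elim p1 p2, c₀, hc₀, ?_, ?_, ?_, ?_⟩
    · rintro (l | l)
      · exact hp1 l
      · exact hp2 l
    · exact lt_of_lt_of_le (lnorm_pos hl0)
        (le_sup (fun l' : Fin n => lnorm (Sum.elim p1 p2 (Sum.inl l'))) l0)
    · apply sup_lt
      intro l
      refine lt_of_lt_of_le ((lnorm_lt_iff (p1 l) a).2 (hpa l)) ?_
      rw [← hkd, ← Real.rpow_intCast]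
      apply Real.rpow_le_rpow_of_exponent_le hk.le
      push_cast
      linarith
    · apply sup_lt
      intro l
      have hvm : Matrix.vecMul (Sum.elim p1 p2) (AbarStar c₀) (Sum.inl l)
          = (∑ l', p1 l' * c₀ l l') + p2 l := by
        simp [Matrix.vecMul, dotProduct, AbarStar, Matrix.one_apply]
      rw [hvm]
      refine lt_of_lt_of_le ((lnorm_lt_iff _ (-b)).2 (by simpa using hpb l)) ?_
      rw [← hkd, ← Real.rpow_intCast]
      apply Real.rpow_le_rpow_of_exponent_le hk.le
      push_cast
      linarith
  · apply hl0
    refine (hp1 l0).eq_zero ?_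
    have := hpa l0
    rw [ha0] at this
    simpa using this

end FSBad
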